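/- Let Y be a geodesic k-hyperbolic space and let γ be a bi-infinite (1, 20k)-quasigeodesic invariant up to 50k-Hausdorff distance under an isometry g (i.e., d_Haus(gγ, γ) ≤ 50k). Fix p ∈ γ and ℓ ≥ 1 with d(p, g^{ℓn}p) ≥ 100k|n| for all n ∈ ℤ, let I be a geodesic from p to g^ℓp and β = ∪_{n∈ℤ} g^{ℓn}I. Then d_Haus(β, γ) ≤ 50k, and β is a quasiline: it is (λ,λ)-quasi-isometric to ℝ for a constant λ depending only on k. -/

import Mathlib

open Filter Topology

/-!
Four-point hyperbolicity says that Gromov products satisfy `(x|z) ≥ min (x|y) (y|z)` up to `δ`, and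
everything is measured by the products `(γ (-N)|γ N)_x`, which are coarsely the distance from `x` to
`γ`. For `x` on a translate of `γ` at finite distance from `γ` they are at most
`3 / 2 * C + 2 * δ` once `N` is large, whatever that finite distance is, and this bound persists, up
to an additive multiple of `δ`, along geodesics between such points. Conversely, if `(γ m|γ n)_y` is
bounded then `γ` cannot go from `γ m` to `γ n` without coming near `y`. Hence the broken axis lies
near `γ`.

In the other direction, the vertices of the broken axis shadow a coarsely dense sequence on `γ`, so
as seen from `γ s` some edge starts on the side of `γ (-N)` and ends on the side of `γ N`, or vice
versa, and that edge must pass near `γ s`.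
-/

section GromovProduct

variable {Y : Type*} [PseudoMetricSpace Y]

/-- The Gromov product `(x|y)_w`, with the base point as first argument. -/
noncomputable def gromovProduct (w x y : Y) : ℝ :=
  (dist w x + dist w y - dist x y) / 2

theorem gromovProduct_comm (w x y : Y) : gromovProduct w x y = gromovProduct w y x := by
  unfold gromovProduct
  rw [dist_comm x y, add_comm (dist w x)]

theorem gromovProduct_self (w x : Y) : gromovProduct w x x = dist w x := by
  simp [gromovProduct]

theorem gromovProduct_nonneg (w x y : Y) : 0 ≤ gromovProduct w x y := by
  unfold gromovProduct
  linarith [dist_triangle_left x y w]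

theorem gromovProduct_le_dist_right (w x y : Y) : gromovProduct w x y ≤ dist w y := by
  unfold gromovProduct
  linarith [dist_triangle w y x, dist_comm x y]

theorem gromovProduct_le_add_dist_base (w w' x y : Y) :
    gromovProduct w x y ≤ gromovProduct w' x y + dist w w' := by
  unfold gromovProduct
  linarith [dist_triangle w w' x, dist_triangle w w' y]

theorem gromovProduct_le_add_dist_left (w x x' y : Y) :
    gromovProduct w x y ≤ gromovProduct w x' y + dist x x' := by
  unfold gromovProduct
  linarith [dist_triangle w x' x, dist_triangle x' x y, dist_comm x x']

theorem dist_eq_gromovProduct (w x a b : Y) :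
    dist w x =
      gromovProduct w a x + gromovProduct w x b - gromovProduct w a b + gromovProduct x a b := by
  unfold gromovProduct
  rw [dist_comm a x]
  ring

end GromovProduct

/-- The four-point condition: `Y` is Gromov hyperbolic with constant `δ`. -/
def IsGromovHyperbolic (Y : Type*) [PseudoMetricSpace Y] (δ : ℝ) : Prop :=
  ∀ x y z w : Y,
    dist x y + dist z w ≤ max (dist x z + dist y w) (dist x w + dist y z) + 2 * δ

namespace IsGromovHyperbolic

variable {Y : Type*} [PseudoMetricSpace Y] {δ : ℝ} {a b w x y z x' : Y}

theorem nonneg [Nonempty Y] (hY : IsGromovHyperbolic Y δ) : 0 ≤ δ := by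
  obtain ⟨x⟩ := ‹Nonempty Y›
  simpa using hY x x x x

theorem min_gromovProduct_le (hY : IsGromovHyperbolic Y δ) (w x y z : Y) :
    min (gromovProduct w x y) (gromovProduct w y z) ≤ gromovProduct w x z + δ := by
  have four_point := hY x z w y
  rw [dist_comm x w, dist_comm z w, dist_comm z y] at four_point
  unfold gromovProduct
  rcases le_max_iff.1 (sub_le_iff_le_add.2 four_point) with h | h
  · exact (min_le_right _ _).trans (by linarith)
  · exact (min_le_left _ _).trans (by linarith)

theorem lt_gromovProduct_trans (hY : IsGromovHyperbolic Y δ) {c : ℝ}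
    (hxy : c + δ < gromovProduct w x y) (hyz : c + δ < gromovProduct w y z) :
    c < gromovProduct w x z := by
  linarith [lt_min hxy hyz, hY.min_gromovProduct_le w x y z]

theorem gromovProduct_le_of_lt_max (hY : IsGromovHyperbolic Y δ) {r : ℝ}
    (hxy : gromovProduct w x y ≤ r)
    (hx : r + 2 * δ < max (gromovProduct w x a) (gromovProduct w x b))
    (hy : r + 2 * δ < max (gromovProduct w y a) (gromovProduct w y b)) :
    gromovProduct w a b ≤ r + 2 * δ := by
  have : Nonempty Y := ⟨w⟩
  have hδ := hY.nonneg
  by_contra! hab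
  have common_end {c : Y} (hxc : r + δ < gromovProduct w x c)
      (hyc : r + δ < gromovProduct w y c) : False := by
    rw [gromovProduct_comm w y c] at hyc
    exact hxy.not_gt (hY.lt_gromovProduct_trans hxc hyc)
  have switch_end {c d : Y} (hxc : r + 2 * δ < gromovProduct w x c)
      (hcd : r + 2 * δ < gromovProduct w c d) : r + δ < gromovProduct w x d :=
    hY.lt_gromovProduct_trans (by linarith) (by linarith)
  rcases lt_max_iff.1 hx with hxa | hxb <;> rcases lt_max_iff.1 hy with hya | hyb
  · exact common_end (c := a) (by linarith) (by linarith)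
  · exact common_end (switch_end hxa hab) (by linarith)
  · rw [gromovProduct_comm] at hab
    exact common_end (switch_end hxb hab) (by linarith)
  · exact common_end (c := b) (by linarith) (by linarith)

theorem gromovProduct_le_of_dist_add_dist_eq (hY : IsGromovHyperbolic Y δ) {r : ℝ}
    (hr : 2 * δ ≤ r) (hx : gromovProduct x a b ≤ r) (hx' : gromovProduct x' a b ≤ r)
    (hy : dist x y + dist y x' = dist x x') : gromovProduct y a b ≤ r + 3 / 2 * δ := by
  have : Nonempty Y := ⟨y⟩
  have hδ := hY.nonneg
  have near_endpoint {u : Y} (hu : gromovProduct u a b ≤ r) :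
      gromovProduct y a b ≤ r + dist y u := by
    linarith [gromovProduct_le_add_dist_base y u a b]
  have one_side {u : Y} (hu : gromovProduct u a b ≤ r) (hau : gromovProduct y a u ≤ δ)
      (hbu : gromovProduct y b u ≤ δ) : gromovProduct y a b ≤ r + 3 / 2 * δ := by
    rw [gromovProduct_comm] at hbu
    linarith [dist_eq_gromovProduct y u a b, near_endpoint hu]
  -- The four-point condition for `c, d, x, x'` bounds the sum of the two diagonals.
  have opposite_sides {c d : Y} (hc : gromovProduct y c x ≤ δ) (hd : gromovProduct y d x' ≤ δ)
      (hx : gromovProduct x c d ≤ r) (hx' : gromovProduct x' c d ≤ r) :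
      gromovProduct y c d ≤ r + 3 / 2 * δ := by
    have diagonals := hY c x d x'
    have hyx := gromovProduct_le_add_dist_base y x c d
    have hyx' := gromovProduct_le_add_dist_base y x' c d
    unfold gromovProduct at *
    rw [dist_comm c x, dist_comm d x', dist_comm c x'] at *
    rw [dist_comm y x] at *
    rcases le_max_iff.1 (sub_le_iff_le_add.2 diagonals) with h | h <;> linarith
  have side (c : Y) : gromovProduct y c x ≤ δ ∨ gromovProduct y c x' ≤ δ := by
    have h := hY.min_gromovProduct_le y x c x'
    have hxx' : gromovProduct y x x' = 0 := by
      unfold gromovProduct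
      linarith [dist_comm x y]
    rwa [hxx', zero_add, gromovProduct_comm y x c, min_le_iff] at h
  rcases side a with ha | ha <;> rcases side b with hb | hb
  · exact one_side hx ha hb
  · exact opposite_sides ha hb hx hx'
  · rw [gromovProduct_comm] at hx hx' ⊢
    exact opposite_sides hb ha hx hx'
  · exact one_side hx' ha hb

theorem gromovProduct_le_of_separated (hY : IsGromovHyperbolic Y δ) {r : ℝ}
    (hx : gromovProduct x a b ≤ r) (hx' : gromovProduct x' a b ≤ r)
    (hxx' : 2 * r + 2 * δ ≤ dist x x')
    (hax : gromovProduct z a b + δ < gromovProduct z a x)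
    (hax' : gromovProduct z a x' ≤ gromovProduct z a b + δ) :
    gromovProduct z x x' ≤ gromovProduct z a b + 2 * δ := by
  by_contra! hcon
  have hxb : gromovProduct z x b ≤ gromovProduct z a b + δ := by
    by_contra! h
    exact lt_irrefl _ (hY.lt_gromovProduct_trans hax h)
  have hxb' : gromovProduct z x' b ≤ gromovProduct z a b + 2 * δ := by
    by_contra! h
    exact hxb.not_gt (hY.lt_gromovProduct_trans (y := x') (by linarith) (by linarith))
  have hax_le : gromovProduct z a x ≤ gromovProduct z a b + 2 * δ := by
    by_contra! h
    exact hax'.not_gt (hY.lt_gromovProduct_trans (y := x) (by linarith) (by linarith))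
  have hzx := dist_eq_gromovProduct z x a b
  have hzx' := dist_eq_gromovProduct z x' a b
  have hprod : gromovProduct z x x' = (dist z x + dist z x' - dist x x') / 2 := rfl
  linarith

theorem dist_le_gromovProduct_add (hY : IsGromovHyperbolic Y δ)
    (hy : dist x y + dist y x' = dist x x') (hxy : dist x y = gromovProduct x z x') :
    dist z y ≤ gromovProduct z x x' + 2 * δ := by
  have four_point := hY z y x x'
  unfold gromovProduct at *
  rw [dist_comm y x, dist_comm x z] at *
  rcases le_max_iff.1 (sub_le_iff_le_add.2 four_point) with h | h <;> linarith

end IsGromovHyperbolic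

theorem exists_lt_not_of_not {P : ℝ → Prop} {lo hi ε : ℝ} (hle : lo ≤ hi) (hε : 0 < ε)
    (hlo : P lo) (hhi : ¬ P hi) : ∃ s t, lo ≤ s ∧ s ≤ t ∧ t ≤ hi ∧ t ≤ s + ε ∧ P s ∧ ¬ P t := by
  let p (n : ℕ) : ℝ := min (lo + n * ε) hi
  have p_zero : p 0 = lo := by simp [p, hle]
  have p_eq_hi : ∃ n, p n = hi := by
    obtain ⟨n, hn⟩ := exists_nat_ge ((hi - lo) / ε)
    rw [div_le_iff₀ hε] at hn
    exact ⟨n, min_eq_right (by linarith)⟩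
  obtain ⟨n, hn, hn'⟩ := Nat.exists_not_and_succ_of_not_zero_of_exists (p := fun n => ¬ P (p n))
    (by rwa [p_zero, not_not]) (p_eq_hi.imp fun n hn => by rwa [hn])
  have hnε : 0 ≤ n * ε := by positivity
  have p_succ : p (n + 1) = min (lo + n * ε + ε) hi := by simp only [p]; push_cast; ring_nf
  refine ⟨p n, p (n + 1), le_min (by linarith) hle, ?_, min_le_right _ _, ?_, not_not.1 hn, hn'⟩
  · rw [p_succ]
    exact min_le_min_right _ (by linarith)
  · rw [p_succ, ← min_add_add_right]
    exact min_le_min_left _ (by linarith)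

theorem exists_abs_sub_eq_one_and_not {P : ℤ → Prop} {m n : ℤ} (hm : P m) (hn : ¬ P n) :
    ∃ i ∈ Finset.uIcc m n, ∃ j ∈ Finset.uIcc m n, |i - j| = 1 ∧ P i ∧ ¬ P j := by
  wlog hmn : m ≤ n generalizing P m n
  · obtain ⟨i, hi, j, hj, hij, hPi, hPj⟩ :=
      this (P := fun k => ¬ P k) hn (not_not.2 hm) (le_of_not_ge hmn)
    rw [Finset.uIcc_comm] at hi hj
    exact ⟨j, hj, i, hi, by rwa [abs_sub_comm], not_not.1 hPj, hPi⟩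
  by_contra! hstep
  rw [Finset.uIcc_of_le hmn] at hstep
  have hP (k : ℤ) (hmk : m ≤ k) : k ≤ n → P k := by
    induction k, hmk using Int.leInduction with
    | base => exact fun _ => hm
    | succ k hmk ih =>
      intro hkn
      exact hstep k (Finset.mem_Icc.2 ⟨hmk, by lia⟩) (k + 1) (Finset.mem_Icc.2 ⟨by lia, hkn⟩)
        (by simp) (ih (by lia))
  exact hn (hP n hmn le_rfl)

theorem not_bddBelow_range_of_coarse {u : ℤ → ℝ} {c e S : ℝ} (hc : 0 < c)
    (hfar : ∀ n m : ℤ, c * |(n : ℝ) - m| - e ≤ |u n - u m|)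
    (hstep : ∀ n, |u n - u (n + 1)| ≤ S) : ¬ BddBelow (Set.range u) := by
  rintro ⟨B, hB⟩
  have le_u (n : ℤ) : B ≤ u n := hB ⟨n, rfl⟩
  have far_lt {m n : ℤ} (h : u m - B < c * |(n : ℝ) - m| - e) : u m < u n := by
    by_contra! hle
    have := hfar n m
    rw [abs_of_nonpos (a := u n - u m) (by linarith)] at this
    linarith [le_u n]
  have exists_large (x : ℝ) : ∃ K : ℕ, x + e < c * K := by
    obtain ⟨K, hK⟩ := exists_nat_gt ((x + e) / c)
    exact ⟨K, by rwa [div_lt_iff₀' hc] at hK⟩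
  obtain ⟨K, hK⟩ := exists_large (max S (u 0 - B))
  have hKS := le_max_left S (u 0 - B)
  have hKB := le_max_right S (u 0 - B)
  have start : u 0 < u (-K) := far_lt (by simpa using by linarith)
  obtain ⟨M, hM⟩ := exists_large (u (-K) - B)
  have finish : u (-K) < u M := far_lt <| by
    push_cast
    rw [sub_neg_eq_add, abs_of_nonneg (by positivity), mul_add]
    have : 0 ≤ c * K := by positivity
    linarith
  obtain ⟨n, hn, hn'⟩ := Nat.exists_not_and_succ_of_not_zero_of_exists
    (p := fun n : ℕ => u (-K) < u n) start.not_gt ⟨M, finish⟩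
  have hfar_n := hfar (n + 1) (-K)
  have hstep_n := (abs_le.1 (hstep n)).1
  have hcn : 0 ≤ c * (n + 1) := by positivity
  push_cast at hn hn' hfar_n hstep_n
  rw [sub_neg_eq_add, abs_of_nonneg (by positivity), abs_of_pos (sub_pos.2 hn'), mul_add]
    at hfar_n
  linarith

theorem not_bddAbove_range_of_coarse {u : ℤ → ℝ} {c e S : ℝ} (hc : 0 < c)
    (hfar : ∀ n m : ℤ, c * |(n : ℝ) - m| - e ≤ |u n - u m|)
    (hstep : ∀ n, |u n - u (n + 1)| ≤ S) : ¬ BddAbove (Set.range u) := by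
  rw [← bddBelow_neg, ← Set.image_neg_eq_neg, ← Set.range_comp]
  refine not_bddBelow_range_of_coarse (S := S) hc (e := e) ?_ ?_
  · intro n m
    simpa only [Function.comp_apply, neg_sub_neg, abs_sub_comm (u m)] using hfar n m
  · intro n
    simpa only [Function.comp_apply, neg_sub_neg, abs_sub_comm (u (n + 1))] using hstep n

/-- A `(1, C)`-quasigeodesic line. -/
def IsRoughGeodesic {Y : Type*} [PseudoMetricSpace Y] (C : ℝ) (γ : ℝ → Y) : Prop :=
  ∀ s t : ℝ, |s - t| - C ≤ dist (γ s) (γ t) ∧ dist (γ s) (γ t) ≤ |s - t| + C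

namespace IsRoughGeodesic

variable {Y : Type*} [PseudoMetricSpace Y] {C δ : ℝ} {γ γ' : ℝ → Y}

theorem nonneg (hγ : IsRoughGeodesic C γ) : 0 ≤ C := by
  simpa using (hγ 0 0).2

theorem sub_le_dist (hγ : IsRoughGeodesic C γ) (s t : ℝ) : t - s - C ≤ dist (γ s) (γ t) := by
  linarith [(hγ s t).1, neg_le_abs (s - t)]

theorem dist_le (hγ : IsRoughGeodesic C γ) {s t : ℝ} (hst : s ≤ t) :
    dist (γ s) (γ t) ≤ t - s + C := by
  simpa [abs_sub_comm s t, abs_of_nonneg (sub_nonneg.2 hst)] using (hγ s t).2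

theorem isometryEquiv_comp (hγ : IsRoughGeodesic C γ) (φ : Y ≃ᵢ Y) :
    IsRoughGeodesic C (φ ∘ γ) := by
  simpa only [IsRoughGeodesic, Function.comp_apply, φ.dist_eq] using hγ

theorem gromovProduct_le (hγ : IsRoughGeodesic C γ) {s t u : ℝ} (hst : s ≤ t) (htu : t ≤ u) :
    gromovProduct (γ t) (γ s) (γ u) ≤ 3 / 2 * C := by
  unfold gromovProduct
  linarith [hγ.dist_le hst, hγ.dist_le htu, hγ.sub_le_dist s u, dist_comm (γ s) (γ t)]

theorem sub_le_gromovProduct_of_le_left (hγ : IsRoughGeodesic C γ) {s t u : ℝ} (hst : s ≤ t) :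
    u - t - 3 / 2 * C ≤ gromovProduct (γ u) (γ s) (γ t) := by
  unfold gromovProduct
  linarith [hγ.dist_le hst, hγ.sub_le_dist s u, hγ.sub_le_dist t u, dist_comm (γ s) (γ u),
    dist_comm (γ t) (γ u)]

theorem sub_le_gromovProduct_of_le_right (hγ : IsRoughGeodesic C γ) {s t u : ℝ} (hst : s ≤ t) :
    s - u - 3 / 2 * C ≤ gromovProduct (γ u) (γ s) (γ t) := by
  unfold gromovProduct
  linarith [hγ.dist_le hst, hγ.sub_le_dist u s, hγ.sub_le_dist u t]

theorem le_max_gromovProduct (hγ : IsRoughGeodesic C γ) (x w : Y) {u N : ℝ} (hu : |u| ≤ N) :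
    (dist x w - dist x (γ 0) - dist w (γ u)) / 2 - C ≤
      max (gromovProduct x w (γ (-N))) (gromovProduct x w (γ N)) := by
  obtain ⟨hNu, huN⟩ := abs_le.1 hu
  unfold gromovProduct
  rcases le_total u 0 with hu0 | hu0
  · refine le_max_of_le_left ?_
    linarith [hγ.dist_le hNu, hγ.sub_le_dist (-N) 0, dist_triangle w (γ u) (γ (-N)),
      dist_triangle_left (γ (-N)) (γ 0) x, dist_comm (γ u) (γ (-N))]
  · refine le_max_of_le_right ?_
    linarith [hγ.dist_le huN, hγ.sub_le_dist 0 N, dist_triangle w (γ u) (γ N),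
      dist_triangle_left (γ 0) (γ N) x]

theorem eventually_gromovProduct_le (hY : IsGromovHyperbolic Y δ) (hγ : IsRoughGeodesic C γ)
    (hγ' : IsRoughGeodesic C γ') {D : ℝ} (hD : ∀ s, ∃ u, dist (γ' s) (γ u) ≤ D) (t : ℝ) :
    ∀ᶠ N in atTop, gromovProduct (γ' t) (γ (-N)) (γ N) ≤ 3 / 2 * C + 2 * δ := by
  have : Nonempty Y := ⟨γ 0⟩
  have hδ := hY.nonneg
  have hC := hγ.nonneg
  have hD0 : 0 ≤ D := dist_nonneg.trans (hD 0).choose_spec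
  have hd0 : 0 ≤ dist (γ' t) (γ 0) := dist_nonneg
  set M := 6 * C + 4 * δ + dist (γ' t) (γ 0) + D + 1 with M_def
  obtain ⟨u, hu⟩ := hD (t - M)
  obtain ⟨v, hv⟩ := hD (t + M)
  have hfar_u := hγ'.sub_le_dist (t - M) t
  rw [dist_comm] at hfar_u
  have hfar_v := hγ'.sub_le_dist t (t + M)
  filter_upwards [eventually_ge_atTop |u|, eventually_ge_atTop |v|] with N hNu hNv
  refine hY.gromovProduct_le_of_lt_max
    (hγ'.gromovProduct_le (s := t - M) (u := t + M) (by linarith) (by linarith)) ?_ ?_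
  · exact lt_of_lt_of_le (by linarith [M_def]) (hγ.le_max_gromovProduct _ _ hNu)
  · exact lt_of_lt_of_le (by linarith [M_def]) (hγ.le_max_gromovProduct _ _ hNv)

theorem exists_lt_gromovProduct_of_le_dist (hY : IsGromovHyperbolic Y δ)
    (hγ : IsRoughGeodesic C γ) {m n : ℝ} (hmn : m ≤ n) {y : Y} {R θ ε : ℝ}
    (hfar : ∀ s, R ≤ dist y (γ s)) (hε : 0 < ε)
    (hθ : gromovProduct y (γ m) (γ n) + δ ≤ θ) (hθR : θ < R) :
    ∃ s t, s ≤ t ∧ t - s ≤ 4 * θ + 3 * C - 2 * R - 2 * gromovProduct y (γ m) (γ n) + 2 * ε ∧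
      θ < gromovProduct y (γ m) (γ s) ∧ θ < gromovProduct y (γ t) (γ n) := by
  have : Nonempty Y := ⟨y⟩
  have hδ := hY.nonneg
  obtain ⟨s, s', hms, hss', hs'n, hs'ε, hs, hs'⟩ :=
    exists_lt_not_of_not (P := fun u => θ < gromovProduct y (γ m) (γ u)) hmn hε
      (by rw [gromovProduct_self]; exact hθR.trans_le (hfar m)) (by linarith)
  obtain ⟨t', t, hst', ht't, htn, htε, ht', ht⟩ :=
    exists_lt_not_of_not (P := fun u => ¬ θ < gromovProduct y (γ u) (γ n)) (hss'.trans hs'n) hε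
      (fun h => lt_irrefl _ <|
        hY.lt_gromovProduct_trans (y := γ s) (hθ.trans_lt hs) (hθ.trans_lt h))
      (by rw [not_not, gromovProduct_self]; exact hθR.trans_le (hfar n))
  refine ⟨s, t, hst'.trans ht't, ?_, hs, not_not.1 ht⟩
  have hs'θ := not_lt.1 hs'
  have ht'θ := not_lt.1 ht'
  unfold gromovProduct at hs'θ ht'θ ⊢
  linarith [hfar s', hfar t', hγ.dist_le (hms.trans hss'), hγ.dist_le (ht't.trans htn),
    hγ.sub_le_dist m n]

theorem exists_dist_lt (hY : IsGromovHyperbolic Y δ) (hγ : IsRoughGeodesic C γ) {m n : ℝ}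
    (hmn : m ≤ n) {y : Y} {R : ℝ}
    (hR : gromovProduct y (γ m) (γ n) + 9 / 14 * C + 24 / 7 * δ < R) :
    ∃ s, dist y (γ s) < R := by
  by_contra! hfar
  have : Nonempty Y := ⟨y⟩
  have hδ := hY.nonneg
  have hC := hγ.nonneg
  set H := gromovProduct y (γ m) (γ n)
  -- Six pieces of `γ` from `γ s` to `γ t` and the two outer products form a chain of eight, which
  -- takes three rounds of hyperbolicity, each costing `δ`.
  let θ := H + δ + δ + δ
  obtain ⟨s, t, hst, hgap, hs, ht⟩ :=
    exists_lt_gromovProduct_of_le_dist hY hγ hmn hfar (sub_pos.2 hR) (θ := θ)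
      (by linarith) (by linarith)
  set τ := (t - s) / 6 with hτ
  have edge (u : ℝ) : θ < gromovProduct y (γ u) (γ (u + τ)) := by
    have hτ0 : 0 ≤ τ := by linarith
    unfold gromovProduct
    linarith [hfar u, hfar (u + τ), hγ.dist_le (le_add_of_nonneg_right hτ0 : u ≤ u + τ)]
  have last_edge : θ < gromovProduct y (γ (s + τ + τ + τ + τ + τ + τ)) (γ n) := by
    rwa [show s + τ + τ + τ + τ + τ + τ = t by rw [hτ]; ring]
  have two_edges (u : ℝ) := hY.lt_gromovProduct_trans (edge u) (edge (u + τ))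
  exact lt_irrefl H <| hY.lt_gromovProduct_trans
    (hY.lt_gromovProduct_trans (hY.lt_gromovProduct_trans hs (edge _)) (two_edges _))
    (hY.lt_gromovProduct_trans (two_edges _) (hY.lt_gromovProduct_trans (edge _) last_edge))

theorem exists_dist_lt_of_dist_add_dist_eq (hY : IsGromovHyperbolic Y δ)
    (hγ : IsRoughGeodesic C γ) {x x' y : Y} {r R : ℝ} (hr : 2 * δ ≤ r)
    (hx : ∀ᶠ N in atTop, gromovProduct x (γ (-N)) (γ N) ≤ r)
    (hx' : ∀ᶠ N in atTop, gromovProduct x' (γ (-N)) (γ N) ≤ r)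
    (hy : dist x y + dist y x' = dist x x') (hR : r + 9 / 14 * C + 69 / 14 * δ < R) :
    ∃ s, dist y (γ s) < R := by
  obtain ⟨N, hxN, hx'N, hN⟩ := (hx.and (hx'.and (eventually_ge_atTop 0))).exists
  have hyN := hY.gromovProduct_le_of_dist_add_dist_eq hr hxN hx'N hy
  exact hγ.exists_dist_lt hY (neg_le_self hN) (by linarith)

theorem not_bddBelow_and_not_bddAbove_range (hγ : IsRoughGeodesic C γ) {x : ℤ → Y} {u : ℤ → ℝ}
    {R c S : ℝ} (hc : 0 < c) (hu : ∀ n, dist (x n) (γ (u n)) ≤ R)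
    (hfar : ∀ n m : ℤ, c * |(n : ℝ) - m| ≤ dist (x n) (x m))
    (hstep : ∀ n, dist (x n) (x (n + 1)) ≤ S) :
    ¬ BddBelow (Set.range u) ∧ ¬ BddAbove (Set.range u) := by
  have u_far (n m : ℤ) : c * |(n : ℝ) - m| - (2 * R + C) ≤ |u n - u m| := by
    linarith [hfar n m, dist_triangle4_right (x n) (x m) (γ (u n)) (γ (u m)), hu n, hu m,
      (hγ (u n) (u m)).2]
  have u_step (n : ℤ) : |u n - u (n + 1)| ≤ S + 2 * R + C := by
    linarith [hstep n, dist_triangle4 (γ (u n)) (x n) (x (n + 1)) (γ (u (n + 1))), hu n,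
      hu (n + 1), dist_comm (γ (u n)) (x n), (hγ (u n) (u (n + 1))).1]
  exact ⟨not_bddBelow_range_of_coarse hc u_far u_step, not_bddAbove_range_of_coarse hc u_far u_step⟩

theorem exists_gromovProduct_consecutive_le (hY : IsGromovHyperbolic Y δ)
    (hγ : IsRoughGeodesic C γ) {x : ℤ → Y} {r R : ℝ}
    (hx : ∀ n, ∀ᶠ N in atTop, gromovProduct (x n) (γ (-N)) (γ N) ≤ r)
    (hsep : ∀ n, 2 * r + 2 * δ ≤ dist (x n) (x (n + 1)))
    {u : ℤ → ℝ} (hu : ∀ n, dist (x n) (γ (u n)) ≤ R)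
    (hbelow : ¬ BddBelow (Set.range u)) (habove : ¬ BddAbove (Set.range u)) (s : ℝ) :
    ∃ n, gromovProduct (γ s) (x n) (x (n + 1)) ≤ 3 / 2 * C + 2 * δ := by
  obtain ⟨_, ⟨i, rfl⟩, hi⟩ := not_bddBelow_iff.1 hbelow (s - (3 * C + δ + R))
  obtain ⟨_, ⟨j, rfl⟩, hj⟩ := not_bddAbove_iff.1 habove (s + (3 * C + δ + R))
  obtain ⟨N, hN, hsN, huiN, hujN⟩ := ((eventually_all_finset (Finset.uIcc i j)).2
    (fun n _ => hx n) |>.and <| (eventually_ge_atTop |s|).and <|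
      (eventually_ge_atTop |u i|).and (eventually_ge_atTop |u j|)).exists
  rw [abs_le] at hsN huiN hujN
  set z := γ s
  set H := gromovProduct z (γ (-N)) (γ N)
  have hH : H ≤ 3 / 2 * C := hγ.gromovProduct_le hsN.1 hsN.2
  have hxi : H + δ < gromovProduct z (γ (-N)) (x i) := by
    have hγi := hγ.sub_le_gromovProduct_of_le_left (u := s) huiN.1
    have hmove := gromovProduct_le_add_dist_left z (γ (u i)) (x i) (γ (-N))
    rw [gromovProduct_comm z _ (γ (-N)), gromovProduct_comm z _ (γ (-N)), dist_comm] at hmove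
    linarith [hu i]
  have hxj : ¬ H + δ < gromovProduct z (γ (-N)) (x j) := by
    intro h
    have hγj := hγ.sub_le_gromovProduct_of_le_right (u := s) hujN.2
    have hmove := gromovProduct_le_add_dist_left z (γ (u j)) (x j) (γ N)
    rw [dist_comm] at hmove
    exact lt_irrefl H (hY.lt_gromovProduct_trans h (by linarith [hu j]))
  obtain ⟨n, hn, m, hm, hnm, hxn, hxm⟩ := exists_abs_sub_eq_one_and_not
    (P := fun n => H + δ < gromovProduct z (γ (-N)) (x n)) hxi hxj
  have hz (hd : 2 * r + 2 * δ ≤ dist (x n) (x m)) :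
      gromovProduct z (x n) (x m) ≤ 3 / 2 * C + 2 * δ :=
    (hY.gromovProduct_le_of_separated (hN n hn) (hN m hm) hd hxn (not_lt.1 hxm)).trans
      (by linarith)
  rcases (abs_eq zero_le_one).1 hnm with h | h
  · obtain rfl : n = m + 1 := by lia
    rw [gromovProduct_comm, dist_comm] at hz
    exact ⟨m, hz (hsep m)⟩
  · obtain rfl : m = n + 1 := by lia
    exact ⟨n, hz (hsep n)⟩

end IsRoughGeodesic

/-- The restriction of `c` to `[0, dist x y]` is a geodesic from `x` to `y`. -/
def IsGeodesicSegment {Y : Type*} [PseudoMetricSpace Y] (c : ℝ → Y) (x y : Y) : Prop :=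
  c 0 = x ∧ c (dist x y) = y ∧ ∀ s ∈ Set.Icc (0 : ℝ) (dist x y), ∀ u ∈ Set.Icc (0 : ℝ) (dist x y),
    dist (c s) (c u) = |s - u|

namespace IsGeodesicSegment

variable {Y : Type*} [PseudoMetricSpace Y] {c : ℝ → Y} {x y : Y} {r : ℝ}

theorem dist_left (hc : IsGeodesicSegment c x y) (hr : r ∈ Set.Icc 0 (dist x y)) :
    dist x (c r) = r := by
  have := hc.2.2 0 (Set.left_mem_Icc.2 dist_nonneg) r hr
  rwa [hc.1, zero_sub, abs_neg, abs_of_nonneg hr.1] at this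

theorem dist_add_dist (hc : IsGeodesicSegment c x y) (hr : r ∈ Set.Icc 0 (dist x y)) :
    dist x (c r) + dist (c r) y = dist x y := by
  have := hc.2.2 r hr (dist x y) (Set.right_mem_Icc.2 dist_nonneg)
  rw [hc.2.1, abs_of_nonpos (sub_nonpos.2 hr.2)] at this
  rw [hc.dist_left hr, this]
  ring

theorem exists_dist_le {δ : ℝ} (hc : IsGeodesicSegment c x y) (hY : IsGromovHyperbolic Y δ)
    (z : Y) : ∃ r ∈ Set.Icc 0 (dist x y), dist z (c r) ≤ gromovProduct z x y + 2 * δ := by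
  have hr : gromovProduct x z y ∈ Set.Icc 0 (dist x y) :=
    ⟨gromovProduct_nonneg x z y, gromovProduct_le_dist_right x z y⟩
  exact ⟨_, hr, hY.dist_le_gromovProduct_add (hc.dist_add_dist hr) (hc.dist_left hr)⟩

theorem isometryEquiv_comp (hc : IsGeodesicSegment c x y) (φ : Y ≃ᵢ Y) :
    IsGeodesicSegment (φ ∘ c) (φ x) (φ y) := by
  simpa only [IsGeodesicSegment, Function.comp_apply, φ.dist_eq, φ.injective.eq_iff] using hc

end IsGeodesicSegment

/-- `β` is `(lam, lam)`-quasi-isometric to the real line. -/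
def IsQuasiline {Y : Type*} [PseudoMetricSpace Y] (lam : ℝ) (β : Set Y) : Prop :=
  ∃ f : ℝ → Y, (∀ t, f t ∈ β) ∧ (∀ y ∈ β, ∃ t, dist y (f t) ≤ lam) ∧
    ∀ s t, (1 / lam) * |s - t| - lam ≤ dist (f s) (f t) ∧ dist (f s) (f t) ≤ lam * |s - t| + lam

theorem IsRoughGeodesic.isQuasiline {Y : Type*} [PseudoMetricSpace Y] {C R : ℝ} {γ : ℝ → Y}
    {β : Set Y} (hγ : IsRoughGeodesic C γ) (hβγ : ∀ y ∈ β, ∃ s, dist y (γ s) ≤ R)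
    (hγβ : ∀ s, ∃ y ∈ β, dist (γ s) y ≤ R) : IsQuasiline (1 + 2 * R + C) β := by
  choose f hfβ hf using hγβ
  have hC := hγ.nonneg
  have hR : 0 ≤ R := dist_nonneg.trans (hf 0)
  set lam := 1 + 2 * R + C with lam_def
  have one_le : 1 ≤ lam := by linarith [lam_def]
  refine ⟨f, hfβ, fun y hy => ?_, fun s t => ⟨?_, ?_⟩⟩
  · obtain ⟨s, hs⟩ := hβγ y hy
    exact ⟨s, by linarith [dist_triangle y (γ s) (f s), hf s]⟩
  · have shrink : (1 / lam) * |s - t| ≤ |s - t| :=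
      mul_le_of_le_one_left (abs_nonneg _) ((div_le_one₀ (by linarith)).2 one_le)
    linarith [(hγ s t).1, dist_triangle4_right (γ s) (γ t) (f s) (f t), hf s, hf t]
  · have stretch : |s - t| ≤ lam * |s - t| := le_mul_of_one_le_left (abs_nonneg _) one_le
    linarith [(hγ s t).2, dist_triangle4 (f s) (γ s) (γ t) (f t), hf s, hf t,
      dist_comm (γ s) (f s)]

section BrokenAxis

variable {Y : Type*} [PseudoMetricSpace Y]

/-- The union of the translates of `J` by the powers of `g ^ m`; for `J` a geodesic from `p` to
`(g ^ m) p` it is a broken geodesic invariant under `g ^ m`. -/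
def brokenAxis (g : Y ≃ᵢ Y) (m : ℤ) (J : Set Y) : Set Y :=
  ⋃ n : ℤ, (g ^ (m * n)) '' J

theorem dist_zpow_apply_zpow_apply (g : Y ≃ᵢ Y) (a b : ℤ) (p : Y) :
    dist ((g ^ a) p) ((g ^ b) p) = dist p ((g ^ (b - a)) p) := by
  rw [← (g ^ a).dist_eq p, ← IsometryEquiv.mul_apply, ← zpow_add, add_sub_cancel]

theorem exists_forall_exists_dist_zpow_apply_le {ι : Type*} {γ : ι → Y} {g : Y ≃ᵢ Y} {D : ℝ}
    (hg : ∀ s, ∃ u, dist (g (γ s)) (γ u) ≤ D) (hg' : ∀ s, ∃ u, dist (γ s) (g (γ u)) ≤ D)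
    (m : ℤ) : ∃ D', ∀ s, ∃ u, dist ((g ^ m) (γ s)) (γ u) ≤ D' := by
  have step {h : Y ≃ᵢ Y} (hh : ∀ s, ∃ u, dist (h (γ s)) (γ u) ≤ D) (f : Y ≃ᵢ Y)
      (hf : ∃ D', ∀ s, ∃ u, dist (f (γ s)) (γ u) ≤ D') :
      ∃ D', ∀ s, ∃ u, dist ((h * f) (γ s)) (γ u) ≤ D' := by
    obtain ⟨D', hf⟩ := hf
    refine ⟨D' + D, fun s => ?_⟩
    obtain ⟨u, hu⟩ := hf s
    obtain ⟨v, hv⟩ := hh u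
    exact ⟨v, (dist_triangle _ (h (γ u)) _).trans
      (add_le_add (by rwa [IsometryEquiv.mul_apply, h.dist_eq]) hv)⟩
  have hinv (s : ι) : ∃ u, dist (g⁻¹ (γ s)) (γ u) ≤ D := by
    obtain ⟨u, hu⟩ := hg' s
    exact ⟨u, by rwa [← g.dist_eq, IsometryEquiv.apply_inv_self]⟩
  exact zpow_induction_left ⟨0, fun s => ⟨s, by simp⟩⟩ (step hg) (step hinv) m

variable {C δ D : ℝ} {γ : ℝ → Y} {g : Y ≃ᵢ Y} {p : Y}

theorem IsRoughGeodesic.eventually_gromovProduct_zpow_apply_le (hY : IsGromovHyperbolic Y δ)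
    (hγ : IsRoughGeodesic C γ) (hg : ∀ s, ∃ u, dist (g (γ s)) (γ u) ≤ D)
    (hg' : ∀ s, ∃ u, dist (γ s) (g (γ u)) ≤ D) (hp : p ∈ Set.range γ) (n : ℤ) :
    ∀ᶠ N in atTop, gromovProduct ((g ^ n) p) (γ (-N)) (γ N) ≤ 3 / 2 * C + 2 * δ := by
  obtain ⟨t, rfl⟩ := hp
  obtain ⟨D', hD'⟩ := exists_forall_exists_dist_zpow_apply_le hg hg' n
  exact hγ.eventually_gromovProduct_le hY (hγ.isometryEquiv_comp (g ^ n)) hD' t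

theorem IsGeodesicSegment.zpow_comp {m : ℤ} {I : ℝ → Y} (hI : IsGeodesicSegment I p ((g ^ m) p))
    (n : ℤ) :
    IsGeodesicSegment (⇑(g ^ (m * n)) ∘ I) ((g ^ (m * n)) p) ((g ^ (m * (n + 1))) p) := by
  rw [mul_add_one, zpow_add, IsometryEquiv.mul_apply]
  exact hI.isometryEquiv_comp (g ^ (m * n))

variable {m : ℤ} {I : ℝ → Y} {c R : ℝ}

theorem exists_dist_lt_of_mem_brokenAxis (hY : IsGromovHyperbolic Y δ) (hγ : IsRoughGeodesic C γ)
    (hg : ∀ s, ∃ u, dist (g (γ s)) (γ u) ≤ D) (hg' : ∀ s, ∃ u, dist (γ s) (g (γ u)) ≤ D)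
    (hp : p ∈ Set.range γ) (hI : IsGeodesicSegment I p ((g ^ m) p))
    (hR : 15 / 7 * C + 97 / 14 * δ < R) {y : Y}
    (hy : y ∈ brokenAxis g m (I '' Set.Icc 0 (dist p ((g ^ m) p)))) : ∃ s, dist y (γ s) < R := by
  obtain ⟨n, _, ⟨r, hr, rfl⟩, rfl⟩ := Set.mem_iUnion.1 hy
  have hC := hγ.nonneg
  have hvertex (n : ℤ) := hγ.eventually_gromovProduct_zpow_apply_le hY hg hg' hp (m * n)
  refine hγ.exists_dist_lt_of_dist_add_dist_eq hY (by linarith) (hvertex n) (hvertex (n + 1))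
    ((hI.zpow_comp n).dist_add_dist ?_) (by linarith)
  rwa [dist_zpow_apply_zpow_apply, mul_add_one, add_sub_cancel_left]

theorem exists_mem_brokenAxis_dist_le (hY : IsGromovHyperbolic Y δ) (hγ : IsRoughGeodesic C γ)
    (hg : ∀ s, ∃ u, dist (g (γ s)) (γ u) ≤ D) (hg' : ∀ s, ∃ u, dist (γ s) (g (γ u)) ≤ D)
    (hp : p ∈ Set.range γ) (hc : 0 < c) (hCc : 3 * C + 6 * δ ≤ c)
    (hfar : ∀ n : ℤ, c * |(n : ℝ)| ≤ dist p ((g ^ (m * n)) p))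
    (hI : IsGeodesicSegment I p ((g ^ m) p))
    (hnear : ∀ n : ℤ, ∃ s, dist ((g ^ (m * n)) p) (γ s) ≤ R) (s : ℝ) :
    ∃ y ∈ brokenAxis g m (I '' Set.Icc 0 (dist p ((g ^ m) p))),
      dist (γ s) y ≤ 3 / 2 * C + 4 * δ := by
  choose u hu using hnear
  have hvertex (n : ℤ) := hγ.eventually_gromovProduct_zpow_apply_le hY hg hg' hp (m * n)
  have hdist (a b : ℤ) : dist ((g ^ (m * a)) p) ((g ^ (m * b)) p) =
      dist p ((g ^ (m * (b - a))) p) := by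
    rw [dist_zpow_apply_zpow_apply, mul_sub]
  have hedge (n : ℤ) : dist ((g ^ (m * n)) p) ((g ^ (m * (n + 1))) p) = dist p ((g ^ m) p) := by
    rw [hdist, add_sub_cancel_left, mul_one]
  have hsep (n : ℤ) : 2 * (3 / 2 * C + 2 * δ) + 2 * δ ≤
      dist ((g ^ (m * n)) p) ((g ^ (m * (n + 1))) p) := by
    have := hfar 1
    rw [mul_one, Int.cast_one, abs_one, mul_one] at this
    linarith [hedge n]
  obtain ⟨hbelow, habove⟩ := hγ.not_bddBelow_and_not_bddAbove_range hc hu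
    (fun a b => by rw [hdist, abs_sub_comm]; exact_mod_cast hfar (b - a)) (fun n => (hedge n).le)
  obtain ⟨n, hn⟩ := hγ.exists_gromovProduct_consecutive_le hY hvertex hsep hu hbelow habove s
  obtain ⟨r, hr, hsr⟩ := (hI.zpow_comp n).exists_dist_le hY (γ s)
  rw [hedge] at hr
  exact ⟨_, Set.mem_iUnion.2 ⟨n, _, ⟨r, hr, rfl⟩, rfl⟩, hsr.trans (by linarith)⟩

theorem broken_quasiaxis_is_quasiline_general (hY : IsGromovHyperbolic Y δ)
    (hγ : IsRoughGeodesic C γ) (hg : ∀ s, ∃ u, dist (g (γ s)) (γ u) ≤ D)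
    (hg' : ∀ s, ∃ u, dist (γ s) (g (γ u)) ≤ D) (hp : p ∈ Set.range γ)
    (hc : 0 < c) (hCc : 3 * C + 6 * δ ≤ c)
    (hfar : ∀ n : ℤ, c * |(n : ℝ)| ≤ dist p ((g ^ (m * n)) p))
    (hI : IsGeodesicSegment I p ((g ^ m) p)) (hR : 15 / 7 * C + 97 / 14 * δ < R) :
    (∀ y ∈ brokenAxis g m (I '' Set.Icc 0 (dist p ((g ^ m) p))), ∃ s, dist y (γ s) ≤ R) ∧
      (∀ s, ∃ y ∈ brokenAxis g m (I '' Set.Icc 0 (dist p ((g ^ m) p))), dist (γ s) y ≤ R) ∧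
      IsQuasiline (1 + 2 * R + C) (brokenAxis g m (I '' Set.Icc 0 (dist p ((g ^ m) p)))) := by
  have : Nonempty Y := ⟨p⟩
  have hδ := hY.nonneg
  have hC := hγ.nonneg
  set β := brokenAxis g m (I '' Set.Icc 0 (dist p ((g ^ m) p)))
  have hβγ (y : Y) (hy : y ∈ β) : ∃ s, dist y (γ s) ≤ R :=
    (exists_dist_lt_of_mem_brokenAxis hY hγ hg hg' hp hI hR hy).imp fun _ => le_of_lt
  have hvertex (n : ℤ) : (g ^ (m * n)) p ∈ β :=
    Set.mem_iUnion.2 ⟨n, p, ⟨0, Set.left_mem_Icc.2 dist_nonneg, hI.1⟩, rfl⟩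
  have hγβ (s : ℝ) : ∃ y ∈ β, dist (γ s) y ≤ R := by
    obtain ⟨y, hy, hsy⟩ := exists_mem_brokenAxis_dist_le hY hγ hg hg' hp hc hCc hfar hI
      (fun n => hβγ _ (hvertex n)) s
    exact ⟨y, hy, hsy.trans (by linarith)⟩
  exact ⟨hβγ, hγβ, hγ.isQuasiline hβγ hγβ⟩

end BrokenAxis

/-- Let `Y` be geodesic and `k`-hyperbolic, `γ` a bi-infinite `(1,20k)`-quasigeodesic
with `d_Haus(gγ, γ) ≤ 50k` for an isometry `g`, `p ∈ γ`, `ℓ ≥ 1` with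
`d(p, g^{ℓn} p) ≥ 100k|n|`, `I` a geodesic from `p` to `g^ℓ p`, and
`β = ⋃_n g^{ℓn} I`. Then `d_Haus(β, γ) ≤ 50k` and `β` is a `(λ,λ)`-quasiline for a
constant `λ` depending only on `k`. -/
theorem broken_quasiaxis_is_quasiline (k : ℝ) (hk : 0 < k) :
    ∃ lam : ℝ, 0 < lam ∧
      ∀ (Y : Type) (_ : MetricSpace Y),
        -- Y is geodesic
        (∀ x y : Y, ∃ c : ℝ → Y, c 0 = x ∧ c (dist x y) = y ∧
          ∀ s ∈ Set.Icc (0 : ℝ) (dist x y), ∀ u ∈ Set.Icc (0 : ℝ) (dist x y),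
            dist (c s) (c u) = |s - u|) →
        -- Y is k-hyperbolic (four-point condition)
        (∀ x y z w : Y,
          dist x y + dist z w ≤ max (dist x z + dist y w) (dist x w + dist y z) + 2 * k) →
        ∀ (γ : ℝ → Y),
          -- γ is a bi-infinite (1,20k)-quasigeodesic
          (∀ s t : ℝ, |s - t| - 20 * k ≤ dist (γ s) (γ t) ∧
            dist (γ s) (γ t) ≤ |s - t| + 20 * k) →
          ∀ g : Y ≃ᵢ Y,
            -- d_Haus(gγ, γ) ≤ 50k
            (∀ s : ℝ, ∃ u : ℝ, dist (g (γ s)) (γ u) ≤ 50 * k) →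
            (∀ s : ℝ, ∃ u : ℝ, dist (γ s) (g (γ u)) ≤ 50 * k) →
            ∀ p : Y, p ∈ Set.range γ →
              ∀ ℓ : ℕ, 1 ≤ ℓ →
                (∀ n : ℤ, 100 * k * |(n : ℝ)| ≤ dist p ((g ^ ((ℓ : ℤ) * n)) p)) →
                ∀ I : ℝ → Y,
                  (I 0 = p ∧ I (dist p ((g ^ (ℓ : ℤ)) p)) = (g ^ (ℓ : ℤ)) p ∧
                    ∀ s ∈ Set.Icc (0 : ℝ) (dist p ((g ^ (ℓ : ℤ)) p)),
                      ∀ u ∈ Set.Icc (0 : ℝ) (dist p ((g ^ (ℓ : ℤ)) p)),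
                        dist (I s) (I u) = |s - u|) →
                  -- β = ⋃ n, g^{ℓn} I
                  (∀ y ∈ ⋃ n : ℤ, (g ^ ((ℓ : ℤ) * n)) ''
                      (I '' Set.Icc (0 : ℝ) (dist p ((g ^ (ℓ : ℤ)) p))),
                    ∃ s : ℝ, dist y (γ s) ≤ 50 * k) ∧
                  (∀ s : ℝ, ∃ y ∈ ⋃ n : ℤ, (g ^ ((ℓ : ℤ) * n)) ''
                      (I '' Set.Icc (0 : ℝ) (dist p ((g ^ (ℓ : ℤ)) p))),
                    dist (γ s) y ≤ 50 * k) ∧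
                  ∃ f : ℝ → Y,
                    (∀ t : ℝ, f t ∈ ⋃ n : ℤ, (g ^ ((ℓ : ℤ) * n)) ''
                      (I '' Set.Icc (0 : ℝ) (dist p ((g ^ (ℓ : ℤ)) p)))) ∧
                    (∀ y ∈ ⋃ n : ℤ, (g ^ ((ℓ : ℤ) * n)) ''
                        (I '' Set.Icc (0 : ℝ) (dist p ((g ^ (ℓ : ℤ)) p))),
                      ∃ t : ℝ, dist y (f t) ≤ lam) ∧
                    (∀ s t : ℝ, (1 / lam) * |s - t| - lam ≤ dist (f s) (f t) ∧
                      dist (f s) (f t) ≤ lam * |s - t| + lam) := by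
  refine ⟨1 + 2 * (50 * k) + 20 * k, by positivity, ?_⟩
  intro Y _ _ hY γ hγ g hg hg' p hp ℓ _ hfar I hI
  exact broken_quasiaxis_is_quasiline_general (m := ℓ) hY hγ hg hg' hp
    (by positivity) (by linarith) hfar hI (by linarith)
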